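/- (Theorem 2, correctness of hybrid enhanced ORBGRAND) Assume ℓ_i ≥ 0 for all i and ℓ_{r_1} ≤ ℓ_{r_2} ≤ … ≤ ℓ_{r_N}. Let V ⊆ F_2^N be an arbitrary set of valid error patterns. Let E_0 ⊆ F_2^N contain 0 and be parent-closed: for every nonzero e ∈ E_0 the parent of e lies in E_0. Let S_0 = { e ∈ F_2^N : e ∉ E_0 and the parent of e lies in E_0 }. Suppose e* ∈ E_0 ∩ V satisfies ζ(e*) ≤ ζ(e) for all e ∈ E_0 ∩ V, and ζ(e*) < ζ(s) for all s ∈ S_0. Then ζ(e*) ≤ ζ(e) for all e ∈ V. -/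

import Mathlib

open scoped BigOperators

/-- `j*(e)`: the (1-indexed) largest position `j` with `e_{r_j} = 1`; `j*(0) = 0`. -/
def jstar {N : ℕ} (r : Equiv.Perm (Fin N)) (e : Fin N → ZMod 2) : ℕ :=
  (Finset.univ.filter fun j : Fin N => e (r j) = 1).sup fun j => (j : ℕ) + 1

/-- The child relation of the EP tree on `F₂^N`: the root `0` has a single child
(the vector with a `1` in coordinate `r_1`); a nonzero `e` with `j*(e) < N` has a
left child (coordinate `r_{j*}` set to `0`, coordinate `r_{j*+1}` set to `1`) and a
right child (coordinate `r_{j*+1}` set to `1`); a node with `j*(e) = N` has no children. -/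
def Child {N : ℕ} (r : Equiv.Perm (Fin N)) (e c : Fin N → ZMod 2) : Prop :=
  (e = 0 ∧ ∃ h : 0 < N,
    c = Function.update (0 : Fin N → ZMod 2) (r ⟨0, h⟩) 1) ∨
  (e ≠ 0 ∧ ∃ h : jstar r e < N,
    c = Function.update
        (Function.update e (r ⟨jstar r e - 1, lt_of_le_of_lt (Nat.sub_le _ _) h⟩) 0)
        (r ⟨jstar r e, h⟩) 1 ∨
    c = Function.update e (r ⟨jstar r e, h⟩) 1)

/-- Soft weight of an error pattern: `ζ(e) = Σ_{i : e_i = 1} ℓ_i`. -/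
noncomputable def zeta {N : ℕ} (ℓ : Fin N → ℝ) (e : Fin N → ZMod 2) : ℝ :=
  ∑ i, if e i = 1 then ℓ i else 0

lemma zmod2_cases (a : ZMod 2) : a = 0 ∨ a = 1 := by
  revert a; decide

lemma jstar_eq_of {N : ℕ} (r : Equiv.Perm (Fin N)) (e : Fin N → ZMod 2) (k : Fin N)
    (hk : e (r k) = 1) (hgt : ∀ j, k < j → e (r j) = 0) : jstar r e = k + 1 := by
  unfold jstar
  apply le_antisymm
  · apply Finset.sup_le
    intro j hj
    rw [Finset.mem_filter] at hj
    by_contra hlt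
    have h : k < j := by rw [Fin.lt_def]; omega
    have := hgt j h
    rw [hj.2] at this
    exact absurd this (by decide)
  · exact Finset.le_sup (f := fun j : Fin N => (j : ℕ) + 1) (by simp [hk])

lemma exists_last {N : ℕ} (r : Equiv.Perm (Fin N)) (e : Fin N → ZMod 2) (he : e ≠ 0) :
    ∃ k : Fin N, e (r k) = 1 ∧ ∀ j, k < j → e (r j) = 0 := by
  obtain ⟨i, hi⟩ := Function.ne_iff.mp he
  have hi1 : e i = 1 := (zmod2_cases (e i)).resolve_left hi
  obtain ⟨k, hk, hmax⟩ := Finset.exists_max_image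
    (Finset.univ.filter fun j : Fin N => e (r j) = 1) id ⟨r.symm i, by simp [hi1]⟩
  refine ⟨k, (Finset.mem_filter.mp hk).2, fun j hj => ?_⟩
  refine (zmod2_cases _).resolve_right fun h => ?_
  exact absurd (hmax j (by simp [h])) (not_le.mpr hj)

lemma zeta_update {N : ℕ} (ℓ : Fin N → ℝ) (e : Fin N → ZMod 2) (i : Fin N) (a : ZMod 2) :
    zeta ℓ (Function.update e i a) + (if e i = 1 then ℓ i else 0)
      = zeta ℓ e + (if a = 1 then ℓ i else 0) := by
  unfold zeta
  rw [← Finset.add_sum_erase _ _ (Finset.mem_univ i),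
    ← Finset.add_sum_erase (a := i) _ (fun x => if e x = 1 then ℓ x else 0) (Finset.mem_univ i)]
  have : ∑ x ∈ Finset.univ.erase i, (if Function.update e i a x = 1 then ℓ x else 0)
      = ∑ x ∈ Finset.univ.erase i, (if e x = 1 then ℓ x else 0) := by
    apply Finset.sum_congr rfl
    intro x hx
    rw [Function.update_of_ne (Finset.ne_of_mem_erase hx)]
  rw [this, Function.update_self]
  ring

/-- Every pattern with last position `k + 1` has a parent that is no heavier, with last
position `k`. -/
lemma exists_parent {N : ℕ} (r : Equiv.Perm (Fin N)) (ℓ : Fin N → ℝ)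
    (hnn : ∀ i, 0 ≤ ℓ i) (hsorted : ∀ i j : Fin N, i ≤ j → ℓ (r i) ≤ ℓ (r j))
    (e : Fin N → ZMod 2) (m : ℕ) (hm : m + 1 < N) (hk : e (r ⟨m + 1, hm⟩) = 1)
    (hgt : ∀ j, (⟨m + 1, hm⟩ : Fin N) < j → e (r j) = 0) :
    ∃ p : Fin N → ZMod 2, Child r p e ∧ zeta ℓ p ≤ zeta ℓ e ∧
      p (r ⟨m, by omega⟩) = 1 ∧ ∀ j, (⟨m, by omega⟩ : Fin N) < j → p (r j) = 0 := by
  set k : Fin N := ⟨m + 1, hm⟩ with hkdef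
  set l : Fin N := ⟨m, by omega⟩ with hldef
  have hlk : l ≠ k := by simp [hkdef, hldef]
  have hrlk : r l ≠ r k := fun h => hlk (r.injective h)
  have hlt : ∀ j, l < j → j ≠ k → k < j := by
    intro j h1 h2
    rw [Fin.lt_def] at *
    have h3 : (j : ℕ) ≠ m + 1 := fun h => h2 (Fin.ext h)
    simp only [hkdef, hldef] at *
    omega
  have z1 := zeta_update ℓ e (r k) 0
  simp only [hk, if_true, zero_ne_one, if_false, add_zero] at z1
  have key : ∀ p : Fin N → ZMod 2, p (r l) = 1 → (∀ j, l < j → p (r j) = 0) →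
      (e = Function.update (Function.update p (r l) 0) (r k) 1 ∨
        e = Function.update p (r k) 1) → Child r p e := by
    intro p h1 h2 h3
    have hj : jstar r p = m + 1 := jstar_eq_of r p l h1 h2
    refine Or.inr ⟨?_, by omega, ?_⟩
    · rintro rfl
      exact absurd h1 (by simp)
    · simp only [hj, Nat.add_sub_cancel]
      exact h3
  have hz : ∀ j, l < j → Function.update e (r k) 0 (r j) = 0 := by
    intro j hj
    by_cases hjk : j = k
    · rw [hjk, Function.update_self]
    · rw [Function.update_of_ne (fun h => hjk (r.injective h))]
      exact hgt j (hlt j hj hjk)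
  rcases zmod2_cases (e (r l)) with h0 | h1
  · have hz' : ∀ j, l < j →
        Function.update (Function.update e (r k) 0) (r l) 1 (r j) = 0 := by
      intro j hj
      rw [Function.update_of_ne (fun h => hj.ne' (r.injective h))]
      exact hz j hj
    refine ⟨Function.update (Function.update e (r k) 0) (r l) 1,
      key _ (by simp) hz' (Or.inl ?_), ?_, by simp, hz'⟩
    · ext1 x
      by_cases hxk : x = r k
      · subst hxk; simp [hk]
      · by_cases hxl : x = r l
        · subst hxl; simp [hrlk, h0]
        · simp [hxk, hxl]
    · have z2 := zeta_update ℓ (Function.update e (r k) 0) (r l) 1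
      rw [Function.update_of_ne hrlk, h0] at z2
      simp only [zero_ne_one, if_true, if_false, add_zero] at z2
      have := hsorted l k (by rw [Fin.le_def]; simp [hkdef, hldef])
      linarith
  · refine ⟨Function.update e (r k) 0,
      key _ (by rw [Function.update_of_ne hrlk, h1]) hz (Or.inr ?_), ?_,
      by rw [Function.update_of_ne hrlk, h1], hz⟩
    · rw [Function.update_idem, ← hk, Function.update_eq_self]
    · linarith [hnn (r k)]

/-- Theorem 2, correctness of hybrid enhanced ORBGRAND: with
nonnegative reliabilities sorted along `r`, let `V` be any set of valid error
patterns, `E₀ ∋ 0` parent-closed, and `S₀` its envelope. If `e* ∈ E₀ ∩ V` satisfies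
`ζ(e*) ≤ ζ(e)` for all `e ∈ E₀ ∩ V` and `ζ(e*) < ζ(s)` for all `s ∈ S₀`, then
`ζ(e*) ≤ ζ(e)` for all `e ∈ V`. -/
theorem stmt17 {N : ℕ} (r : Equiv.Perm (Fin N)) (ℓ : Fin N → ℝ)
    (hnn : ∀ i, 0 ≤ ℓ i)
    (hsorted : ∀ i j : Fin N, i ≤ j → ℓ (r i) ≤ ℓ (r j))
    (V : Set (Fin N → ZMod 2))
    (E₀ : Set (Fin N → ZMod 2)) (hzero : (0 : Fin N → ZMod 2) ∈ E₀)
    (hclosed : ∀ e ∈ E₀, e ≠ 0 → ∀ p : Fin N → ZMod 2, Child r p e → p ∈ E₀)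
    (S₀ : Set (Fin N → ZMod 2))
    (hS₀ : S₀ = {e | e ∉ E₀ ∧ ∃ p ∈ E₀, Child r p e})
    (estar : Fin N → ZMod 2) (hstar : estar ∈ E₀ ∩ V)
    (hmin1 : ∀ e ∈ E₀ ∩ V, zeta ℓ estar ≤ zeta ℓ e)
    (hmin2 : ∀ s ∈ S₀, zeta ℓ estar < zeta ℓ s) :
    ∀ e ∈ V, zeta ℓ estar ≤ zeta ℓ e := by
  subst hS₀
  have main : ∀ (n : ℕ) (hn : n < N) (e : Fin N → ZMod 2), e (r ⟨n, hn⟩) = 1 →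
      (∀ j, (⟨n, hn⟩ : Fin N) < j → e (r j) = 0) → e ∉ E₀ → zeta ℓ estar < zeta ℓ e := by
    intro n
    induction n with
    | zero =>
      intro hn e h1 h2 he
      refine hmin2 e ⟨he, 0, hzero, Or.inl ⟨rfl, hn, ?_⟩⟩
      ext1 x
      obtain ⟨j, rfl⟩ := r.surjective x
      by_cases hj : j = ⟨0, hn⟩
      · subst hj; simp [h1]
      · rw [Function.update_of_ne (fun h => hj (r.injective h))]
        refine h2 j ?_
        rw [Fin.lt_def]
        exact Nat.pos_of_ne_zero fun h => hj (Fin.ext h)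
    | succ m ih =>
      intro hn e h1 h2 he
      obtain ⟨p, hc, hz, hp1, hp2⟩ := exists_parent r ℓ hnn hsorted e m hn h1 h2
      by_cases hp : p ∈ E₀
      · exact hmin2 e ⟨he, p, hp, hc⟩
      · exact lt_of_lt_of_le (ih _ p hp1 hp2 hp) hz
  intro e heV
  by_cases he : e ∈ E₀
  · exact hmin1 e ⟨he, heV⟩
  · have hne : e ≠ 0 := fun h => he (h ▸ hzero)
    obtain ⟨k, hk1, hk2⟩ := exists_last r e hne
    exact (main k k.2 e hk1 hk2 he).le
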